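/- arXiv:2003.00716 — 3 statements merged into one kernel-verified Lean document; each statement's English description precedes it below -/
import Mathlib

section
/- Three point-vortices on the sphere with vanishing momentum are relative equilibria (rigid motion of the shape): Let Γ₁, Γ₂, Γ₃ ∈ ℝ \ {0} and let r₁, r₂, r₃ : ℝ → ℝ³ be differentiable curves solving the point-vortex equations on the sphere with N = 3, with ‖rᵢ(0)‖ = 1 for all i, rᵢ(t)·rⱼ(t) ≠ 1 for all i ≠ j and all t, and vanishing total linear momentum Γ₁r₁(0) + Γ₂r₂(0) + Γ₃r₃(0) = 0. Then all pairwise inner products are constant in time: rᵢ(t)·rⱼ(t) = rᵢ(0)·rⱼ(0) for all i, j and all t. -/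
/-!
The rate of change of `rᵢ · rⱼ` is a sum over the third vortices `k` of multiples of
`Γₖ rₖ · (rᵢ × rⱼ)`. The momentum `∑ Γₖ rₖ` is conserved, because its time derivative is a double
sum of antisymmetric terms. If it vanishes and there are only three vortices, then `Γₖ rₖ` is a
combination of `rᵢ` and `rⱼ`, so every such triple product is zero.
-/

open scoped BigOperators

noncomputable def dot3 (a b : Fin 3 → ℝ) : ℝ := ∑ i, a i * b i

noncomputable def sphereRHS (N : ℕ) (Γ : Fin N → ℝ) (r : Fin N → Fin 3 → ℝ) (i : Fin N) :
    Fin 3 → ℝ :=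
  (1 / (2 * Real.pi)) •
    ∑ j ∈ Finset.univ.filter (fun j => j ≠ i),
      (Γ j / (1 - dot3 (r i) (r j))) • crossProduct (r i) (r j)

def IsPVSolutionSphere (N : ℕ) (Γ : Fin N → ℝ) (r : ℝ → Fin N → Fin 3 → ℝ) : Prop :=
  (∀ t : ℝ, ∀ i j : Fin N, i ≠ j → dot3 (r t i) (r t j) ≠ 1) ∧
  (∀ (t : ℝ) (i : Fin N), HasDerivAt (fun s => r s i) (sphereRHS N Γ (r t) i) t)

open scoped Matrix

lemma sum_sum_eq_zero_of_antisymm {ι M : Type*} [Fintype ι] [AddCommGroup M] [IsAddTorsionFree M]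
    {f : ι → ι → M} (hf : ∀ i j, f i j = -f j i) : ∑ i, ∑ j, f i j = 0 := by
  refine self_eq_neg.mp ?_
  calc ∑ i, ∑ j, f i j = ∑ i, ∑ j, f j i := Finset.sum_comm
    _ = ∑ i, ∑ j, -f i j :=
      Finset.sum_congr rfl fun i _ => Finset.sum_congr rfl fun j _ => hf j i
    _ = -∑ i, ∑ j, f i j := by simp only [Finset.sum_neg_distrib]

lemma eq_of_forall_hasDerivAt_zero {𝕜 E : Type*} [RCLike 𝕜] [NormedAddCommGroup E]
    [NormedSpace 𝕜 E] {f : 𝕜 → E} (hf : ∀ t, HasDerivAt f 0 t) (s t : 𝕜) : f s = f t :=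
  is_const_of_deriv_eq_zero (fun u => (hf u).differentiableAt) (fun u => (hf u).deriv) s t

lemma hasDerivAt_dotProduct {𝕜 𝔸 ι : Type*} [NontriviallyNormedField 𝕜] [NormedRing 𝔸]
    [NormedAlgebra 𝕜 𝔸] [Fintype ι] {u v : 𝕜 → ι → 𝔸} {u' v' : ι → 𝔸} {t : 𝕜}
    (hu : HasDerivAt u u' t) (hv : HasDerivAt v v' t) :
    HasDerivAt (fun s => u s ⬝ᵥ v s) (u' ⬝ᵥ v t + u t ⬝ᵥ v') t := by
  have hsum : HasDerivAt (fun s => u s ⬝ᵥ v s) (∑ k, (u' k * v t k + u t k * v' k)) t :=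
    HasDerivAt.fun_sum fun k _ => (hasDerivAt_pi.mp hu k).mul (hasDerivAt_pi.mp hv k)
  exact hsum.congr_deriv Finset.sum_add_distrib

lemma mul_triple_product_eq_zero_of_sum_smul_eq_zero {R : Type*} [CommRing R] {c : Fin 3 → R}
    {v : Fin 3 → Fin 3 → R} (h : ∑ l, c l • v l = 0) (i j k : Fin 3) :
    c k * (v k ⬝ᵥ (v i ⨯₃ v j)) = 0 := by
  by_cases hdistinct : i ≠ j ∧ k ≠ i ∧ k ≠ j
  · have hothers : ∀ l, l ≠ k → l = i ∨ l = j := by omega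
    calc c k * (v k ⬝ᵥ (v i ⨯₃ v j)) = ∑ l, c l * (v l ⬝ᵥ (v i ⨯₃ v j)) := by
          symm
          refine Finset.sum_eq_single_of_mem k (Finset.mem_univ k) fun l _ hl => ?_
          rcases hothers l hl with rfl | rfl <;> simp
      _ = (∑ l, c l • v l) ⬝ᵥ (v i ⨯₃ v j) := by
          simp only [sum_dotProduct, smul_dotProduct, smul_eq_mul]
      _ = 0 := by rw [h, zero_dotProduct]
  · obtain rfl | rfl | rfl : i = j ∨ k = i ∨ k = j := by tauto
    all_goals simp

lemma dot3_comm (a b : Fin 3 → ℝ) : dot3 a b = dot3 b a := dotProduct_comm a b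

section PointVortices

variable {N : ℕ}

lemma sphereRHS_eq_sum (Γ : Fin N → ℝ) (r : Fin N → Fin 3 → ℝ) (i : Fin N) :
    sphereRHS N Γ r i =
      (1 / (2 * Real.pi)) • ∑ j, (Γ j / (1 - dot3 (r i) (r j))) • (r i ⨯₃ r j) := by
  rw [sphereRHS, Finset.sum_filter_of_ne]
  rintro j - hj rfl
  exact hj (by rw [cross_self, smul_zero])

lemma sum_smul_sphereRHS (Γ : Fin N → ℝ) (r : Fin N → Fin 3 → ℝ) :
    ∑ i, Γ i • sphereRHS N Γ r i = 0 := by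
  have hantisymm : ∀ i j, (Γ i * (Γ j / (1 - dot3 (r i) (r j)))) • (r i ⨯₃ r j) =
      -((Γ j * (Γ i / (1 - dot3 (r j) (r i)))) • (r j ⨯₃ r i)) := by
    intro i j
    rw [← smul_neg, cross_anticomm, dot3_comm (r j), mul_div_left_comm]
  calc ∑ i, Γ i • sphereRHS N Γ r i = (1 / (2 * Real.pi)) •
        ∑ i, ∑ j, (Γ i * (Γ j / (1 - dot3 (r i) (r j)))) • (r i ⨯₃ r j) := by
        simp only [sphereRHS_eq_sum, Finset.smul_sum, smul_smul, mul_left_comm]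
    _ = 0 := by rw [sum_sum_eq_zero_of_antisymm hantisymm, smul_zero]

lemma dotProduct_sphereRHS (Γ : Fin N → ℝ) (r : Fin N → Fin 3 → ℝ) (i : Fin N) (u : Fin 3 → ℝ) :
    u ⬝ᵥ sphereRHS N Γ r i =
      1 / (2 * Real.pi) * ∑ k, Γ k / (1 - dot3 (r i) (r k)) * (r k ⬝ᵥ (u ⨯₃ r i)) := by
  simp only [sphereRHS_eq_sum, dotProduct_smul, dotProduct_sum, smul_eq_mul,
    triple_product_permutation (r _) u]

variable {Γ : Fin N → ℝ} {r : ℝ → Fin N → Fin 3 → ℝ}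

lemma IsPVSolutionSphere.momentum_eq (h : IsPVSolutionSphere N Γ r) (s t : ℝ) :
    ∑ i, Γ i • r s i = ∑ i, Γ i • r t i := by
  refine eq_of_forall_hasDerivAt_zero (f := fun s => ∑ i, Γ i • r s i) (fun u => ?_) s t
  exact (HasDerivAt.fun_sum fun i _ => (h.2 u i).const_smul (Γ i)).congr_deriv
    (sum_smul_sphereRHS Γ (r u))

/-- The summands with `k = i` or `k = j`, whose denominators may vanish, have zero triple product.
-/
lemma IsPVSolutionSphere.hasDerivAt_dot3 (h : IsPVSolutionSphere N Γ r) (t : ℝ) (i j : Fin N) :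
    HasDerivAt (fun s => dot3 (r s i) (r s j))
      (1 / (2 * Real.pi) *
        ∑ k, (1 / (1 - dot3 (r t j) (r t k)) - 1 / (1 - dot3 (r t i) (r t k))) *
          (Γ k * (r t k ⬝ᵥ (r t i ⨯₃ r t j)))) t := by
  refine (hasDerivAt_dotProduct (h.2 t i) (h.2 t j)).congr_deriv ?_
  rw [dotProduct_comm, dotProduct_sphereRHS, dotProduct_sphereRHS, ← mul_add,
    ← Finset.sum_add_distrib]
  congr 1
  refine Finset.sum_congr rfl fun k _ => ?_
  rw [← cross_anticomm (r t i) (r t j), dotProduct_neg]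
  ring

end PointVortices

theorem sphere_three_vortices_zero_momentum_relative_equilibrium_general
    {Γ : Fin 3 → ℝ} {r : ℝ → Fin 3 → Fin 3 → ℝ} (hsol : IsPVSolutionSphere 3 Γ r)
    (hmom : ∑ i, Γ i • r 0 i = 0) (t : ℝ) (i j : Fin 3) :
    dot3 (r t i) (r t j) = dot3 (r 0 i) (r 0 j) := by
  refine eq_of_forall_hasDerivAt_zero (f := fun s => dot3 (r s i) (r s j)) (fun s => ?_) t 0
  have hmom_s : ∑ i, Γ i • r s i = 0 := (hsol.momentum_eq s 0).trans hmom
  refine (hsol.hasDerivAt_dot3 s i j).congr_deriv ?_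
  simp only [mul_triple_product_eq_zero_of_sum_smul_eq_zero hmom_s, mul_zero,
    Finset.sum_const_zero]

theorem sphere_three_vortices_zero_momentum_relative_equilibrium
    (Γ : Fin 3 → ℝ) (hΓ : ∀ i, Γ i ≠ 0)
    (r : ℝ → Fin 3 → Fin 3 → ℝ) (hsol : IsPVSolutionSphere 3 Γ r)
    (hunit : ∀ i : Fin 3, dot3 (r 0 i) (r 0 i) = 1)
    (hmom : ∑ i, Γ i • r 0 i = 0) :
    ∀ (t : ℝ) (i j : Fin 3), dot3 (r t i) (r t j) = dot3 (r 0 i) (r 0 j) :=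
  sphere_three_vortices_zero_momentum_relative_equilibrium_general hsol hmom
end

section
/- Two point-vortices on the hyperbolic plane are relative equilibria: Let Γ₁, Γ₂ ∈ ℝ and let r₁, r₂ : ℝ → ℝ³ be differentiable curves solving the point-vortex equations on the hyperbolic plane with N = 2, with (r₁(t)·_L r₂(t))² ≠ 1 for all t. Then r₁(t)·_L r₂(t) is constant in t, and for all t and i ∈ {1,2} one has ṙᵢ(t) = Ω ×_L rᵢ(t), where Ω = (Γ₁ r₁(0) + Γ₂ r₂(0)) / (π ((r₁(0) ·_L r₂(0))² − 1)) is a constant vector. -/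
/-!
Two vortices turn, at each time `t`, with one common angular velocity `Ω(t)`, proportional to the
moment `Γ₀ r₀ + Γ₁ r₁`: adding a multiple of `rᵢ` to the other vortex does not change its cross
product with `rᵢ`. As `Ω ×_L ·` is skew for the Lorentzian pairing, `r₀ ·_L r₁` is constant. The
moment is constant because the interaction terms are antisymmetric. Hence so is `Ω(t)`, being a
function of these two invariants.
-/

open scoped BigOperators

/-- The Lorentzian pairing a ·_L b = -a₁b₁ - a₂b₂ + a₃b₃ on ℝ³, for L = diag(-1,-1,1). -/
noncomputable def dotL (a b : Fin 3 → ℝ) : ℝ := -(a 0 * b 0) - a 1 * b 1 + a 2 * b 2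

/-- The Lorentzian cross product a ×_L b = L (a × b), for L = diag(-1,-1,1). -/
noncomputable def crossL (a b : Fin 3 → ℝ) : Fin 3 → ℝ :=
  ![-(crossProduct a b 0), -(crossProduct a b 1), crossProduct a b 2]

noncomputable def hypRHS (N : ℕ) (Γ : Fin N → ℝ) (r : Fin N → Fin 3 → ℝ) (i : Fin N) :
    Fin 3 → ℝ :=
  (-(1 / Real.pi)) •
    ∑ j ∈ Finset.univ.filter (fun j => j ≠ i),
      (Γ j / ((dotL (r i) (r j)) ^ 2 - 1)) • crossL (r i) (r j)

def IsPVSolutionHyp (N : ℕ) (Γ : Fin N → ℝ) (r : ℝ → Fin N → Fin 3 → ℝ) : Prop :=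
  (∀ t : ℝ, ∀ i j : Fin N, i ≠ j → (dotL (r t i) (r t j)) ^ 2 ≠ 1) ∧
  (∀ (t : ℝ) (i : Fin N), HasDerivAt (fun s => r s i) (hypRHS N Γ (r t) i) t)

/-- The moment `∑ᵢ Γᵢ rᵢ` of a configuration of `N` vortices, a first integral of the vortex
equations. -/
noncomputable def vortexMoment {N : ℕ} (Γ : Fin N → ℝ) (x : Fin N → Fin 3 → ℝ) : Fin 3 → ℝ :=
  ∑ i, Γ i • x i

/-- The common instantaneous angular velocity of two vortices, with the Lorentzian cross product
as infinitesimal rotation. It takes the junk value `0` where the equations are singular, that is,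
where `(x₀ ·_L x₁)² = 1`. -/
noncomputable def pairAngularVelocity (Γ : Fin 2 → ℝ) (x : Fin 2 → Fin 3 → ℝ) : Fin 3 → ℝ :=
  (1 / (Real.pi * (dotL (x 0) (x 1) ^ 2 - 1))) • vortexMoment Γ x

section LorentzianAlgebra

variable (a b c : Fin 3 → ℝ)

lemma dotL_comm : dotL a b = dotL b a := by
  unfold dotL
  ring

lemma crossL_self : crossL a a = 0 := by
  ext k
  fin_cases k <;> simp [crossL]

lemma crossL_anticomm : -crossL a b = crossL b a := by
  ext k
  fin_cases k <;> simp [crossL, ← cross_anticomm a b]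

lemma crossL_add_left : crossL (a + b) c = crossL a c + crossL b c := by
  ext k
  fin_cases k <;> simp [crossL, add_comm]

lemma crossL_smul_left (s : ℝ) : crossL (s • a) b = s • crossL a b := by
  ext k
  fin_cases k <;> simp [crossL]

open Matrix in
lemma dotL_crossL_left : dotL (crossL a b) c = c ⬝ᵥ crossProduct a b := by
  simp only [dotL, crossL, vec3_dotProduct, cons_val]
  ring

lemma dotL_crossL_skew : dotL (crossL a b) c + dotL b (crossL a c) = 0 := by
  rw [dotL_comm b, dotL_crossL_left, dotL_crossL_left, triple_product_permutation c,
    triple_product_permutation b, ← cross_anticomm c b, dotProduct_neg, neg_add_cancel]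

end LorentzianAlgebra

lemma hasDerivAt_dotL {u v : ℝ → Fin 3 → ℝ} {u' v' : Fin 3 → ℝ} {t : ℝ}
    (hu : HasDerivAt u u' t) (hv : HasDerivAt v v' t) :
    HasDerivAt (fun s => dotL (u s) (v s)) (dotL u' (v t) + dotL (u t) v') t := by
  rw [hasDerivAt_pi] at hu hv
  refine ((((hu 0).mul (hv 0)).neg.sub ((hu 1).mul (hv 1))).add
    ((hu 2).mul (hv 2))).congr_deriv ?_
  unfold dotL
  ring

lemma dotL_eq_of_hasDerivAt_crossL {ω u v : ℝ → Fin 3 → ℝ}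
    (hu : ∀ t, HasDerivAt u (crossL (ω t) (u t)) t)
    (hv : ∀ t, HasDerivAt v (crossL (ω t) (v t)) t) (s t : ℝ) :
    dotL (u s) (v s) = dotL (u t) (v t) := by
  have hderiv (τ : ℝ) : HasDerivAt (fun τ => dotL (u τ) (v τ)) 0 τ :=
    (hasDerivAt_dotL (hu τ) (hv τ)).congr_deriv (dotL_crossL_skew _ _ _)
  exact is_const_of_deriv_eq_zero (fun τ => (hderiv τ).differentiableAt)
    (fun τ => (hderiv τ).deriv) s t

section VectorField

variable {N : ℕ} (Γ : Fin N → ℝ) (x : Fin N → Fin 3 → ℝ)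

lemma hypRHS_eq_sum_univ (i : Fin N) :
    hypRHS N Γ x i =
      (-(1 / Real.pi)) • ∑ j, (Γ j / (dotL (x i) (x j) ^ 2 - 1)) • crossL (x i) (x j) := by
  rw [hypRHS, Finset.sum_filter_of_ne]
  rintro j - hj rfl
  exact hj (by rw [crossL_self, smul_zero])

lemma vortexMoment_hypRHS_eq_zero : vortexMoment Γ (hypRHS N Γ x) = 0 := by
  have hterm (i j : Fin N) :
      Γ i • (Γ j / (dotL (x i) (x j) ^ 2 - 1)) • crossL (x i) (x j) =
        -(Γ j • (Γ i / (dotL (x j) (x i) ^ 2 - 1)) • crossL (x j) (x i)) := by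
    rw [← crossL_anticomm (x j), dotL_comm (x i)]
    module
  have hsum : ∑ i, ∑ j, Γ i • (Γ j / (dotL (x i) (x j) ^ 2 - 1)) • crossL (x i) (x j) = 0 := by
    rw [← self_eq_neg]
    conv_lhs => rw [Finset.sum_comm]
    simp only [← Finset.sum_neg_distrib, ← hterm]
  calc
    vortexMoment Γ (hypRHS N Γ x) = (-(1 / Real.pi)) •
        ∑ i, ∑ j, Γ i • (Γ j / (dotL (x i) (x j) ^ 2 - 1)) • crossL (x i) (x j) := by
      simp only [vortexMoment, hypRHS_eq_sum_univ, Finset.smul_sum,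
        smul_comm (Γ _) (-(1 / Real.pi))]
    _ = 0 := by rw [hsum, smul_zero]

end VectorField

lemma hypRHS_two_eq_crossL (Γ : Fin 2 → ℝ) (x : Fin 2 → Fin 3 → ℝ) (i : Fin 2) :
    hypRHS 2 Γ x i = crossL (pairAngularVelocity Γ x) (x i) := by
  rw [hypRHS_eq_sum_univ, pairAngularVelocity, vortexMoment, Fin.sum_univ_two, Fin.sum_univ_two,
    crossL_smul_left, crossL_add_left, crossL_smul_left, crossL_smul_left]
  fin_cases i
  · simp only [Fin.zero_eta, crossL_self, ← crossL_anticomm (x 0) (x 1), div_eq_mul_inv, mul_inv]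
    module
  · simp only [Fin.mk_one, crossL_self, ← crossL_anticomm (x 0) (x 1), dotL_comm (x 1) (x 0),
      div_eq_mul_inv, mul_inv]
    module

namespace IsPVSolutionHyp

lemma vortexMoment_eq {N : ℕ} {Γ : Fin N → ℝ} {r : ℝ → Fin N → Fin 3 → ℝ}
    (hsol : IsPVSolutionHyp N Γ r) (s t : ℝ) : vortexMoment Γ (r s) = vortexMoment Γ (r t) := by
  have hderiv (τ : ℝ) : HasDerivAt (fun τ => vortexMoment Γ (r τ)) 0 τ :=
    (HasDerivAt.fun_sum fun i _ => (hsol.2 τ i).const_smul (Γ i)).congr_deriv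
      (vortexMoment_hypRHS_eq_zero Γ (r τ))
  exact is_const_of_deriv_eq_zero (fun τ => (hderiv τ).differentiableAt)
    (fun τ => (hderiv τ).deriv) s t

variable {Γ : Fin 2 → ℝ} {r : ℝ → Fin 2 → Fin 3 → ℝ}

lemma hasDerivAt_crossL (hsol : IsPVSolutionHyp 2 Γ r) (t : ℝ) (i : Fin 2) :
    HasDerivAt (fun s => r s i) (crossL (pairAngularVelocity Γ (r t)) (r t i)) t :=
  (hsol.2 t i).congr_deriv (hypRHS_two_eq_crossL Γ (r t) i)

lemma dotL_eq (hsol : IsPVSolutionHyp 2 Γ r) (s t : ℝ) (i j : Fin 2) :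
    dotL (r s i) (r s j) = dotL (r t i) (r t j) :=
  dotL_eq_of_hasDerivAt_crossL (fun τ => hsol.hasDerivAt_crossL τ i)
    (fun τ => hsol.hasDerivAt_crossL τ j) s t

lemma pairAngularVelocity_eq (hsol : IsPVSolutionHyp 2 Γ r) (s t : ℝ) :
    pairAngularVelocity Γ (r s) = pairAngularVelocity Γ (r t) := by
  rw [pairAngularVelocity, pairAngularVelocity, hsol.dotL_eq s t, hsol.vortexMoment_eq s t]

end IsPVSolutionHyp

theorem hyp_two_vortices_relative_equilibrium (Γ : Fin 2 → ℝ) (r : ℝ → Fin 2 → Fin 3 → ℝ)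
    (hsol : IsPVSolutionHyp 2 Γ r)
    (Ω : Fin 3 → ℝ)
    (hΩ : Ω = (1 / (Real.pi * ((dotL (r 0 0) (r 0 1)) ^ 2 - 1))) •
        (Γ 0 • r 0 0 + Γ 1 • r 0 1)) :
    (∀ t : ℝ, dotL (r t 0) (r t 1) = dotL (r 0 0) (r 0 1)) ∧
    (∀ (t : ℝ) (i : Fin 2), HasDerivAt (fun s => r s i) (crossL Ω (r t i)) t) := by
  have hΩ₀ : Ω = pairAngularVelocity Γ (r 0) := by
    rw [hΩ, pairAngularVelocity, vortexMoment, Fin.sum_univ_two]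
  refine ⟨fun t => hsol.dotL_eq t 0 0 1, fun t i => ?_⟩
  rw [hΩ₀, hsol.pairAngularVelocity_eq 0 t]
  exact hsol.hasDerivAt_crossL t i
end

section
/- Two point-vortices on the hyperbolic plane cannot have vanishing momentum: Let Γ₁, Γ₂ ∈ ℝ \ {0} and let r₁, r₂ ∈ ℝ³ lie on the hyperboloid (rᵢ ·_L rᵢ = 1 with third coordinate zᵢ > 0 for i = 1, 2). If Γ₁ r₁ + Γ₂ r₂ = 0, then r₁ = r₂ (and Γ₂ = −Γ₁); in particular, the two-vortex equations on the hyperbolic plane admit no admissible configuration (r₁ ≠ r₂) with vanishing total linear momentum. -/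
/-!
Vanishing momentum means `Γ₁ r₁ = -Γ₂ r₂`. Comparing the values of the Lorentzian quadratic form
on both sides gives `Γ₁² = Γ₂²`. If `Γ₁ = Γ₂`, the points are antipodal, hence on different sheets
of the hyperboloid; if `Γ₁ = -Γ₂`, they coincide.
-/

open scoped BigOperators

section QuadraticMap

variable {R M N : Type*} [CommRing R] [IsDomain R] [AddCommGroup M] [Module R M]
  [AddCommGroup N] [Module R N] [Module.IsTorsionFree R N] {a b : R} {x y : M}

theorem sq_eq_sq_of_smul_add_smul_eq_zero (Q : QuadraticMap R M N) (hQ : Q x = Q y)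
    (hQx : Q x ≠ 0) (h : a • x + b • y = 0) : a ^ 2 = b ^ 2 := by
  have hsmul : (a ^ 2) • Q x = (b ^ 2) • Q x :=
    calc
      (a ^ 2) • Q x = Q (a • x) := by rw [Q.map_smul, sq]
      _ = Q (b • y) := by rw [eq_neg_of_add_eq_zero_left h, Q.map_neg]
      _ = (b ^ 2) • Q x := by rw [Q.map_smul, sq, hQ]
  exact smul_left_injective R hQx hsmul

theorem hyp_two_vortices_no_vanishing_momentum_general [Module.IsTorsionFree R M]
    (Q : QuadraticMap R M N) (ha : a ≠ 0) (hQ : Q x = Q y) (hQx : Q x ≠ 0) (hxy : x + y ≠ 0)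
    (h : a • x + b • y = 0) : x = y ∧ b = -a := by
  rcases sq_eq_sq_iff_eq_or_eq_neg.mp (sq_eq_sq_of_smul_add_smul_eq_zero Q hQ hQx h).symm with
    rfl | rfl
  · rw [← smul_add] at h
    exact absurd ((smul_eq_zero_iff_right ha).mp h) hxy
  · rw [neg_smul, ← sub_eq_add_neg, sub_eq_zero] at h
    exact ⟨smul_right_injective M ha h, rfl⟩

end QuadraticMap

/-- The Lorentzian quadratic form of signature `(1, 2)` on `ℝ³`, associated with the pairing
`dotL`. -/
noncomputable def lorentzForm : QuadraticForm ℝ (Fin 3 → ℝ) :=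
  QuadraticMap.weightedSumSquares ℝ (![-1, -1, 1] : Fin 3 → ℝ)

theorem lorentzForm_apply (v : Fin 3 → ℝ) : lorentzForm v = dotL v v := by
  simp only [lorentzForm, QuadraticMap.weightedSumSquares_apply, Fin.sum_univ_three, dotL,
    Matrix.cons_val, smul_eq_mul]
  ring

theorem hyp_two_vortices_no_vanishing_momentum (Γ₁ Γ₂ : ℝ) (hΓ₁ : Γ₁ ≠ 0) (hΓ₂ : Γ₂ ≠ 0)
    (r₁ r₂ : Fin 3 → ℝ) (h₁ : dotL r₁ r₁ = 1) (h₂ : dotL r₂ r₂ = 1)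
    (hz₁ : r₁ 2 > 0) (hz₂ : r₂ 2 > 0)
    (hmom : Γ₁ • r₁ + Γ₂ • r₂ = 0) :
    r₁ = r₂ ∧ Γ₂ = -Γ₁ := by
  rw [← lorentzForm_apply] at h₁ h₂
  have not_antipodal : r₁ + r₂ ≠ 0 := ne_of_apply_ne (· 2) (add_pos hz₁ hz₂).ne'
  exact hyp_two_vortices_no_vanishing_momentum_general lorentzForm hΓ₁ (h₁.trans h₂.symm)
    (h₁ ▸ one_ne_zero) not_antipodal hmom
end
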